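/- Let L be an ideal lattice in which every element is semi-prime. Then the adjunction morphism L → L_open(Spec L), a ↦ D(a), is an isomorphism of ideal lattices: it is an order isomorphism from L onto the lattice of open subsets of Spec L which sends suprema to unions, sends the product ab to D(a) ∩ D(b), and sends 1 to Spec L. -/

import Mathlib

open CompleteLattice TopologicalSpace

/-- An ideal lattice: a complete, compactly generated lattice with an associative
multiplication distributing over finite suprema, for which `⊤` is a compact
two-sided identity and products of compact elements are compact. -/
structure IsIdealLattice (α : Type*) [CompleteLattice α] [Mul α] : Prop where
  mul_assoc : ∀ a b c : α, a * b * c = a * (b * c)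
  compactlyGenerated : ∀ a : α, a = sSup {b : α | b ≤ a ∧ IsCompactElement b}
  mul_sup : ∀ a b c : α, a * (b ⊔ c) = a * b ⊔ a * c
  sup_mul : ∀ a b c : α, (a ⊔ b) * c = a * c ⊔ b * c
  top_compact : IsCompactElement (⊤ : α)
  top_mul : ∀ a : α, ⊤ * a = a
  mul_top : ∀ a : α, a * ⊤ = a
  compact_mul : ∀ a b : α, IsCompactElement a → IsCompactElement b → IsCompactElement (a * b)

/-- A prime element of an ideal lattice: `p ≠ ⊤` and `a * b ≤ p` implies `a ≤ p` or `b ≤ p`. -/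
def IsPrimeElt {α : Type*} [CompleteLattice α] [Mul α] (p : α) : Prop :=
  p ≠ ⊤ ∧ ∀ a b : α, a * b ≤ p → a ≤ p ∨ b ≤ p

/-- A semi-prime element of an ideal lattice: `b * b ≤ a` implies `b ≤ a`. -/
def IsSemiprimeElt {α : Type*} [CompleteLattice α] [Mul α] (a : α) : Prop :=
  ∀ b : α, b * b ≤ a → b ≤ a

/-- The prime spectrum of an ideal lattice: the set of prime elements. -/
def SpecL (α : Type*) [CompleteLattice α] [Mul α] : Type _ := {p : α // IsPrimeElt p}

/-- The Zariski-closed set `V(a) = {p ∈ Spec L : a ≤ p}`. -/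
def zV {α : Type*} [CompleteLattice α] [Mul α] (a : α) : Set (SpecL α) := {p | a ≤ p.1}

/-- The Zariski-open set `D(a) = {p ∈ Spec L : a ≰ p}`. -/
def zD {α : Type*} [CompleteLattice α] [Mul α] (a : α) : Set (SpecL α) := {p | ¬ a ≤ p.1}

/-- The Zariski topology on `SpecL α`: the open sets are exactly the sets `zD a`. -/
instance {α : Type*} [CompleteLattice α] [Mul α] : TopologicalSpace (SpecL α) :=
  TopologicalSpace.generateFrom {U : Set (SpecL α) | ∃ a : α, U = zD a}

namespace IsIdealLattice

variable {α : Type*} [CompleteLattice α] [Mul α]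

theorem mul_le_mul (hL : IsIdealLattice α) {a b c d : α} (hab : a ≤ b) (hcd : c ≤ d) :
    a * c ≤ b * d := by
  calc a * c ≤ a * c ⊔ b * c := le_sup_left
    _ = b * c := by rw [← hL.sup_mul, sup_eq_right.2 hab]
    _ ≤ b * c ⊔ b * d := le_sup_left
    _ = b * d := by rw [← hL.mul_sup, sup_eq_right.2 hcd]

theorem mul_le_left (hL : IsIdealLattice α) (a b : α) : a * b ≤ a :=
  (hL.mul_le_mul le_rfl le_top).trans_eq (hL.mul_top a)

theorem mul_le_right (hL : IsIdealLattice α) (a b : α) : a * b ≤ b :=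
  (hL.mul_le_mul le_top le_rfl).trans_eq (hL.top_mul b)

theorem sup_mul_sup_le (hL : IsIdealLattice α) (p x y : α) : (p ⊔ x) * (p ⊔ y) ≤ p ⊔ x * y := by
  rw [hL.mul_sup, hL.sup_mul p x y]
  exact sup_le ((hL.mul_le_right _ _).trans le_sup_left)
    (sup_le ((hL.mul_le_left _ _).trans le_sup_left) le_sup_right)

/-- An element maximal among those not above `c` is prime, provided all elements are semi-prime. -/
theorem isPrimeElt_of_maximal (hL : IsIdealLattice α) (hsp : ∀ a : α, IsSemiprimeElt a)
    {c p : α} (hp : Maximal (fun x => ¬ c ≤ x) p) : IsPrimeElt p := by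
  refine ⟨fun h => hp.prop (h ▸ le_top), fun x y hxy => ?_⟩
  have le_sup {z : α} (hz : ¬ z ≤ p) : c ≤ p ⊔ z := by
    by_contra h
    exact hz (le_sup_right.trans (hp.le_of_ge h le_sup_left))
  by_contra! h
  refine hp.prop (hsp p c ?_)
  exact (hL.mul_le_mul (le_sup h.1) (le_sup h.2)).trans
    ((hL.sup_mul_sup_le p x y).trans (sup_le le_rfl hxy))

theorem exists_isCompactElement_not_le (hL : IsIdealLattice α) {a b : α} (hab : ¬ a ≤ b) :
    ∃ c ≤ a, IsCompactElement c ∧ ¬ c ≤ b := by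
  by_contra! h
  refine hab ?_
  rw [hL.compactlyGenerated a]
  exact sSup_le fun c hc => h c hc.1 hc.2

theorem exists_isPrimeElt_ge_not_le (hL : IsIdealLattice α) (hsp : ∀ a : α, IsSemiprimeElt a)
    {a b : α} (hab : ¬ a ≤ b) : ∃ p, IsPrimeElt p ∧ b ≤ p ∧ ¬ a ≤ p := by
  obtain ⟨c, hca, hc, hcb⟩ := hL.exists_isCompactElement_not_le hab
  obtain ⟨p, hbp, hp⟩ := zorn_le_nonempty₀ {x : α | ¬ c ≤ x} (fun s hs hchain y hy => by
    refine ⟨sSup s, fun hle => ?_, fun z hz => le_sSup hz⟩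
    obtain ⟨x, hx, hcx⟩ := hc s _ ⟨y, hy⟩ hchain.directedOn (_root_.isLUB_sSup s) hle
    exact hs hx hcx) b hcb
  exact ⟨p, hL.isPrimeElt_of_maximal hsp hp, hbp, fun h => hp.prop (hca.trans h)⟩

theorem zD_mul (hL : IsIdealLattice α) (a b : α) : (zD (a * b) : Set (SpecL α)) = zD a ∩ zD b := by
  ext p
  have : a * b ≤ p.1 ↔ a ≤ p.1 ∨ b ≤ p.1 :=
    ⟨p.2.2 a b, Or.rec (hL.mul_le_left a b).trans (hL.mul_le_right a b).trans⟩
  simp [zD, this]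

theorem zD_subset_zD_iff (hL : IsIdealLattice α) (hsp : ∀ a : α, IsSemiprimeElt a) {a b : α} :
    (zD a : Set (SpecL α)) ⊆ zD b ↔ a ≤ b := by
  refine ⟨fun h => ?_, fun h p hp hb => hp (h.trans hb)⟩
  by_contra hab
  obtain ⟨p, hp, hbp, hap⟩ := hL.exists_isPrimeElt_ge_not_le hsp hab
  exact h (a := ⟨p, hp⟩) hap hbp

end IsIdealLattice

theorem zD_sSup {α : Type*} [CompleteLattice α] [Mul α] (A : Set α) :
    (zD (sSup A) : Set (SpecL α)) = ⋃ a ∈ A, zD a := by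
  ext p
  simp [zD]

theorem zD_top {α : Type*} [CompleteLattice α] [Mul α] :
    (zD (⊤ : α) : Set (SpecL α)) = Set.univ :=
  Set.eq_univ_of_forall fun p h => p.2.1 (top_le_iff.1 h)

theorem isOpen_zD {α : Type*} [CompleteLattice α] [Mul α] (a : α) :
    IsOpen (zD a : Set (SpecL α)) :=
  isOpen_generateFrom_of_mem ⟨a, rfl⟩

theorem IsIdealLattice.exists_eq_zD_of_isOpen {α : Type*} [CompleteLattice α] [Mul α]
    (hL : IsIdealLattice α) {U : Set (SpecL α)} (hU : IsOpen U) : ∃ a : α, zD a = U := by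
  induction hU with
  | basic U hU => exact hU.imp fun _ => Eq.symm
  | univ => exact ⟨⊤, zD_top⟩
  | inter U V _ _ hU hV =>
    obtain ⟨a, rfl⟩ := hU
    obtain ⟨b, rfl⟩ := hV
    exact ⟨a * b, hL.zD_mul a b⟩
  | sUnion S _ hS =>
    refine ⟨sSup {a | zD a ∈ S}, ?_⟩
    rw [zD_sSup]
    ext p
    simp only [Set.mem_iUnion, Set.mem_sUnion, Set.mem_ofPred_eq, exists_prop]
    constructor
    · rintro ⟨a, ha, hp⟩
      exact ⟨_, ha, hp⟩
    · rintro ⟨U, hU, hp⟩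
      obtain ⟨a, rfl⟩ := hS U hU
      exact ⟨a, hU, hp⟩

/-- If every element of the ideal lattice `L` is semi-prime, then `a ↦ D(a)` is an
isomorphism of ideal lattices from `L` onto the lattice of open subsets of `Spec L`:
an order isomorphism sending suprema to unions, products to intersections, and `⊤` to
the whole space. -/
theorem adjunction_iso_of_all_semiprime {α : Type*} [CompleteLattice α] [Mul α]
    (hL : IsIdealLattice α) (hsp : ∀ a : α, IsSemiprimeElt a) :
    ∃ e : α ≃o Opens (SpecL α),
      (∀ a : α, ((e a : Opens (SpecL α)) : Set (SpecL α)) = zD a) ∧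
      (∀ A : Set α, ((e (sSup A) : Opens (SpecL α)) : Set (SpecL α)) = ⋃ a ∈ A, zD a) ∧
      (∀ a b : α, ((e (a * b) : Opens (SpecL α)) : Set (SpecL α)) = zD a ∩ zD b) ∧
      ((e ⊤ : Opens (SpecL α)) : Set (SpecL α)) = Set.univ := by
  let f : α ↪o Opens (SpecL α) :=
    OrderEmbedding.ofMapLEIff (fun a => ⟨zD a, isOpen_zD a⟩) fun _ _ => hL.zD_subset_zD_iff hsp
  have hf : Function.Surjective f := fun U =>
    (hL.exists_eq_zD_of_isOpen U.isOpen).imp fun _ h => Opens.ext h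
  exact ⟨RelIso.ofSurjective f hf, fun _ => rfl, zD_sSup, hL.zD_mul, zD_top⟩
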